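/- Let I be an ideal of C^∞(ℝ^n, ℝ) and J an ideal of C^∞(ℝ^m, ℝ) such that the quotient ℝ-algebras W₁ = C^∞(ℝ^n, ℝ)/I and W₂ = C^∞(ℝ^m, ℝ)/J are Weil algebras. Then for every ℝ-algebra homomorphism φ : W₁ → W₂ there exists a smooth map ψ : ℝ^m → ℝ^n such that precomposition with ψ maps I into J and the induced ℝ-algebra homomorphism C^∞(ℝ^n, ℝ)/I → C^∞(ℝ^m, ℝ)/J, [u] ↦ [u∘ψ], equals φ. -/

import Mathlib

open scoped Manifold

local notation "∞" => (⊤ : ℕ∞)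

/-- A Weil algebra over `ℝ`: a commutative `ℝ`-algebra which is finite-dimensional as an
`ℝ`-vector space, is a local ring whose maximal ideal is nilpotent, and whose residue
field is isomorphic to `ℝ`. -/
structure IsWeilAlgebra (W : Type*) [CommRing W] [Algebra ℝ W] : Prop where
  finiteDimensional : FiniteDimensional ℝ W
  isLocalRing : IsLocalRing W
  maximalIdeal_nilpotent : ∃ k : ℕ, (@IsLocalRing.maximalIdeal W _ isLocalRing) ^ k = ⊥
  residueField_iso : Nonempty ((@IsLocalRing.ResidueField W _ isLocalRing) ≃ₐ[ℝ] ℝ)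

open MeasureTheory

/-- The integral over `[a, b]` of a smooth function depending on a parameter in a locally compact
space is a smooth function of the parameter. -/
theorem ContDiff.parametric_intervalIntegral {E F : Type} [NormedAddCommGroup E] [NormedSpace ℝ E]
    [LocallyCompactSpace E] [NormedAddCommGroup F] [NormedSpace ℝ F] {f : E × ℝ → F}
    (hf : ContDiff ℝ ∞ f) (a b : ℝ) : ContDiff ℝ ∞ fun x => ∫ t in a..b, f (x, t) := by
  refine contDiff_iff_forall_nat_le.2 fun k _ => ?_
  induction k generalizing F with
  | zero =>
    exact contDiff_zero.2 (intervalIntegral.continuous_parametric_intervalIntegral_of_continuous'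
      (f := fun x t => f (x, t)) hf.continuous a b)
  | succ k ih =>
    let f' : E × ℝ → E →L[ℝ] F := fun q => (fderiv ℝ f q).comp (ContinuousLinearMap.inl ℝ E ℝ)
    have hf' : ContDiff ℝ ∞ f' :=
      (hf.fderiv_right (m := (∞ : ℕ∞)) le_rfl).clm_comp contDiff_const
    have hderiv (x : E) (t : ℝ) : HasFDerivAt (fun x => f (x, t)) (f' (x, t)) x :=
      ((hf.differentiable (by simp)) (x, t)).hasFDerivAt.comp x (hasFDerivAt_prodMk_left x t)
    refine contDiff_succ_iff_hasFDerivAt.2 ⟨_, ih hf' le_top, fun x₀ => ?_⟩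
    obtain ⟨s, hs, hsx⟩ := exists_compact_mem_nhds x₀
    obtain ⟨C, hC⟩ := (hs.prod (isCompact_uIcc (a := a) (b := b))).exists_bound_of_continuousOn
      hf'.continuous.continuousOn
    have hc (x : E) : Continuous fun t => f (x, t) := hf.continuous.comp (by fun_prop)
    have hc' (x : E) : Continuous fun t => f' (x, t) := hf'.continuous.comp (by fun_prop)
    exact intervalIntegral.hasFDerivAt_integral_of_dominated_of_fderiv_le
      (F := fun x t => f (x, t)) (F' := fun x t => f' (x, t)) (bound := fun _ => C) hsx
      (.of_forall fun x => (hc x).aestronglyMeasurable) ((hc x₀).intervalIntegrable a b)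
      (hc' x₀).aestronglyMeasurable
      (.of_forall fun t ht x hx => hC (x, t) ⟨hx, Set.uIoc_subset_uIcc ht⟩)
      intervalIntegrable_const (.of_forall fun t _ x _ => hderiv x t)

/-- **Hadamard's lemma**: a smooth function `u` satisfies `u x - u p = G x (x - p)` for some smooth
family `G` of continuous linear forms. -/
theorem ContDiff.exists_sub_eq_clm_apply {E F : Type} [NormedAddCommGroup E] [NormedSpace ℝ E]
    [LocallyCompactSpace E] [NormedAddCommGroup F] [NormedSpace ℝ F] [CompleteSpace F] {u : E → F}
    (hu : ContDiff ℝ ∞ u) (p : E) :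
    ∃ G : E → E →L[ℝ] F, ContDiff ℝ ∞ G ∧ ∀ x, u x - u p = G x (x - p) := by
  have hu' : ContDiff ℝ ∞ (fderiv ℝ u) := hu.fderiv_right (m := (∞ : ℕ∞)) le_rfl
  let f : E × ℝ → E →L[ℝ] F := fun q => fderiv ℝ u (p + q.2 • (q.1 - p))
  have hf : ContDiff ℝ ∞ f := hu'.comp (by fun_prop)
  refine ⟨_, hf.parametric_intervalIntegral 0 1, fun x => ?_⟩
  have hc : Continuous fun t : ℝ => f (x, t) := hf.continuous.comp (by fun_prop)
  have hline (t : ℝ) : HasDerivAt (fun t : ℝ => u (p + t • (x - p))) (f (x, t) (x - p)) t := by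
    have hl : HasDerivAt (fun t : ℝ => p + t • (x - p)) (x - p) t := by
      simpa using ((hasDerivAt_id t).smul_const (x - p)).const_add p
    exact ((hu.differentiable (by simp)) (p + t • (x - p))).hasFDerivAt.comp_hasDerivAt t hl
  rw [ContinuousLinearMap.intervalIntegral_apply (hc.intervalIntegrable 0 1),
    intervalIntegral.integral_eq_sub_of_hasDerivAt (fun t _ => hline t)
      ((hc.clm_apply continuous_const).intervalIntegrable 0 1)]
  simp

/-- The `ℝ`-algebra `C^∞(ℝ^n, ℝ)`. -/
abbrev SmoothFunctions (n : ℕ) : Type :=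
  C^∞⟮𝓘(ℝ, Fin n → ℝ), (Fin n → ℝ); 𝓘(ℝ, ℝ), ℝ⟯

namespace SmoothFunctions

variable {n : ℕ}

/-- The `i`-th coordinate function on `ℝ^n`. -/
def coord (i : Fin n) : SmoothFunctions n :=
  ⟨fun x => x i, (contDiff_apply ℝ ℝ i).contMDiff⟩

@[simp]
theorem coord_apply (i : Fin n) (x : Fin n → ℝ) : coord i x = x i := rfl

@[simp]
theorem algebraMap_apply (c : ℝ) (x : Fin n → ℝ) : algebraMap ℝ (SmoothFunctions n) c x = c := rfl

@[simp]
theorem add_apply (u v : SmoothFunctions n) (x : Fin n → ℝ) : (u + v) x = u x + v x := rfl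

@[simp]
theorem sub_apply (u v : SmoothFunctions n) (x : Fin n → ℝ) : (u - v) x = u x - v x := rfl

@[simp]
theorem pow_apply (u : SmoothFunctions n) (k : ℕ) (x : Fin n → ℝ) : (u ^ k) x = u x ^ k := rfl

@[simp]
theorem sum_apply {ι : Type*} (s : Finset ι) (u : ι → SmoothFunctions n) (x : Fin n → ℝ) :
    (∑ i ∈ s, u i) x = ∑ i ∈ s, u i x :=
  map_sum (ContMDiffMap.evalRingHom x) u s

theorem isUnit_of_forall_ne_zero {u : SmoothFunctions n} (hu : ∀ x, u x ≠ 0) : IsUnit u := by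
  refine IsUnit.of_mul_eq_one ⟨fun x => (u x)⁻¹, (u.contMDiff.contDiff.inv hu).contMDiff⟩ ?_
  ext x
  exact mul_inv_cancel₀ (hu x)

/-- Every character of `C^∞(ℝ^n, ℝ)` is evaluation at a point. -/
theorem algHom_apply_eq_eval (χ : SmoothFunctions n →ₐ[ℝ] ℝ) (u : SmoothFunctions n) :
    χ u = u fun i => χ (coord i) := by
  let f : SmoothFunctions n := (u - algebraMap ℝ _ (χ u)) ^ 2 +
    ∑ i, (coord i - algebraMap ℝ _ (χ (coord i))) ^ 2
  have hχf : χ f = 0 := by simp [f]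
  obtain ⟨x, hx⟩ : ∃ x, f x = 0 := by
    by_contra! h
    exact ((isUnit_of_forall_ne_zero h).map χ).ne_zero hχf
  simp only [f, add_apply, pow_apply, sub_apply, sum_apply, algebraMap_apply, coord_apply] at hx
  rw [add_eq_zero_iff_of_nonneg (by positivity) (by positivity),
    Finset.sum_eq_zero_iff_of_nonneg fun i _ => by positivity] at hx
  have hxp : x = fun i => χ (coord i) := funext fun i => by
    simpa [sub_eq_zero] using hx.2 i (Finset.mem_univ i)
  rw [← hxp]
  exact (sub_eq_zero.1 (pow_eq_zero_iff two_ne_zero |>.1 hx.1)).symm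

/-- Hadamard's lemma in terms of coordinate functions. -/
theorem exists_eq_add_sum_coord_sub_mul (u : SmoothFunctions n) (p : Fin n → ℝ) :
    ∃ g : Fin n → SmoothFunctions n,
      u = algebraMap ℝ _ (u p) + ∑ i, (coord i - algebraMap ℝ _ (p i)) * g i := by
  obtain ⟨G, hG, hGu⟩ := u.contMDiff.contDiff.exists_sub_eq_clm_apply p
  refine ⟨fun i => ⟨fun x => G x (Pi.single i 1), (hG.clm_apply contDiff_const).contMDiff⟩, ?_⟩
  ext x
  rw [add_apply, algebraMap_apply, ← sub_eq_iff_eq_add', hGu x, sum_apply]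
  conv_lhs => rw [pi_eq_sum_univ' (x - p), map_sum]
  refine Finset.sum_congr rfl fun i _ => ?_
  rw [map_smul]
  rfl

/-- A homomorphism from `C^∞(ℝ^n, ℝ)` to a Weil algebra is determined by its values on the
coordinate functions. -/
theorem algHom_ext_of_isWeilAlgebra {W : Type*} [CommRing W] [Algebra ℝ W] (hW : IsWeilAlgebra W)
    {α β : SmoothFunctions n →ₐ[ℝ] W} (h : ∀ i, α (coord i) = β (coord i)) : α = β := by
  have := hW.isLocalRing
  obtain ⟨k, hk⟩ := hW.maximalIdeal_nilpotent
  obtain ⟨e⟩ := hW.residueField_iso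
  let π : W →ₐ[ℝ] ℝ := e.toAlgHom.comp (IsScalarTower.toAlgHom ℝ W _)
  have hπ {w : W} (hw : π w = 0) : w ∈ IsLocalRing.maximalIdeal W :=
    (IsLocalRing.residue_eq_zero_iff w).1 ((map_eq_zero_iff e e.injective).1 hw)
  let p : Fin n → ℝ := fun i => π (α (coord i))
  have hmem (j : ℕ) : ∀ u, α u - β u ∈ IsLocalRing.maximalIdeal W ^ j := by
    induction j with
    | zero => simp
    | succ j ih =>
      intro u
      obtain ⟨g, hg⟩ := exists_eq_add_sum_coord_sub_mul u p
      have hdiff : α u - β u =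
          ∑ i, (α (coord i) - algebraMap ℝ W (p i)) * (α (g i) - β (g i)) := by
        rw [hg]
        simp [h, mul_sub]
      rw [hdiff, pow_succ']
      exact Ideal.sum_mem _ fun i _ => Ideal.mul_mem_mul (hπ (by simp [p])) (ih (g i))
  ext u
  have hu := hmem k u
  rwa [hk, Ideal.mem_bot, sub_eq_zero] at hu

/-- Precomposition with a smooth map, as a homomorphism of `ℝ`-algebras. -/
noncomputable def compRight {m : ℕ}
    (ψ : C^∞⟮𝓘(ℝ, Fin m → ℝ), (Fin m → ℝ); 𝓘(ℝ, Fin n → ℝ), (Fin n → ℝ)⟯) :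
    SmoothFunctions n →ₐ[ℝ] SmoothFunctions m where
  toFun u := u.comp ψ
  map_one' := rfl
  map_mul' _ _ := rfl
  map_zero' := rfl
  map_add' _ _ := rfl
  commutes' _ := rfl

end SmoothFunctions

/-- Let `I` be an ideal of `C^∞(ℝ^n, ℝ)` and `J` an ideal of `C^∞(ℝ^m, ℝ)`
such that the quotient `ℝ`-algebras `W₁ = C^∞(ℝ^n, ℝ)/I` and `W₂ = C^∞(ℝ^m, ℝ)/J` are
Weil algebras.  Then every `ℝ`-algebra homomorphism `φ : W₁ → W₂` is induced by
precomposition with some smooth map `ψ : ℝ^m → ℝ^n` which carries `I` into `J`: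
`φ [u] = [u ∘ ψ]` for all `u`. -/
theorem weilAlgebraHom_exists_smooth_map
    {n m : ℕ}
    (I : Ideal C^∞⟮𝓘(ℝ, Fin n → ℝ), (Fin n → ℝ); 𝓘(ℝ, ℝ), ℝ⟯)
    (J : Ideal C^∞⟮𝓘(ℝ, Fin m → ℝ), (Fin m → ℝ); 𝓘(ℝ, ℝ), ℝ⟯)
    (hI : IsWeilAlgebra (C^∞⟮𝓘(ℝ, Fin n → ℝ), (Fin n → ℝ); 𝓘(ℝ, ℝ), ℝ⟯ ⧸ I))
    (hJ : IsWeilAlgebra (C^∞⟮𝓘(ℝ, Fin m → ℝ), (Fin m → ℝ); 𝓘(ℝ, ℝ), ℝ⟯ ⧸ J))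
    (φ : (C^∞⟮𝓘(ℝ, Fin n → ℝ), (Fin n → ℝ); 𝓘(ℝ, ℝ), ℝ⟯ ⧸ I) →ₐ[ℝ]
         (C^∞⟮𝓘(ℝ, Fin m → ℝ), (Fin m → ℝ); 𝓘(ℝ, ℝ), ℝ⟯ ⧸ J)) :
    ∃ ψ : C^∞⟮𝓘(ℝ, Fin m → ℝ), (Fin m → ℝ); 𝓘(ℝ, Fin n → ℝ), (Fin n → ℝ)⟯,
      (∀ u ∈ I, u.comp ψ ∈ J) ∧
      ∀ u : C^∞⟮𝓘(ℝ, Fin n → ℝ), (Fin n → ℝ); 𝓘(ℝ, ℝ), ℝ⟯,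
        φ (Ideal.Quotient.mk I u) = Ideal.Quotient.mk J (u.comp ψ) := by
  choose v hv using fun i => Ideal.Quotient.mk_surjective
    (φ (Ideal.Quotient.mk I (SmoothFunctions.coord i)))
  let ψ : C^∞⟮𝓘(ℝ, Fin m → ℝ), (Fin m → ℝ); 𝓘(ℝ, Fin n → ℝ), (Fin n → ℝ)⟯ :=
    ⟨fun x i => v i x, (contDiff_pi.2 fun i => (v i).contMDiff.contDiff).contMDiff⟩
  have heq : φ.comp (Ideal.Quotient.mkₐ ℝ I) =
      (Ideal.Quotient.mkₐ ℝ J).comp (SmoothFunctions.compRight ψ) :=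
    SmoothFunctions.algHom_ext_of_isWeilAlgebra hJ fun i => (hv i).symm
  have hφ u : φ (Ideal.Quotient.mk I u) = Ideal.Quotient.mk J (u.comp ψ) := DFunLike.congr_fun heq u
  refine ⟨ψ, fun u hu => ?_, hφ⟩
  rw [← Ideal.Quotient.eq_zero_iff_mem, ← hφ, Ideal.Quotient.eq_zero_iff_mem.2 hu, map_zero]
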